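/- For every integer k ≥ 2 there exists a sequence (f_v)_{v ∈ ℕ}, where f_v is a k-uniform hypergraph property on v vertices, together with constants c, C > 0 and v₀ ∈ ℕ, such that for all v ≥ v₀: c·v^{⌈k/2⌉} ≤ s(f_v) ≤ C·v^{⌈k/2⌉} and c·v^k ≤ bs(f_v) ≤ C·v^k; that is, s(f_v) = Θ(v^{⌈k/2⌉}) and bs(f_v) = Θ(v^k). -/

import Mathlib

open Finset

/-- The coordinate set: `k`-element subsets of `Fin v`. -/
abbrev KSet (v k : ℕ) : Type := {S : Finset (Fin v) // S.card = k}

/-- A `k`-uniform hypergraph on `Fin v`: a Boolean function on `k`-sets. -/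
abbrev HGraph (v k : ℕ) : Type := KSet v k → Bool

/-- Sensitivity of `f` at input `x`: the number of coordinates whose flip changes `f`. -/
def localSens {I : Type} [Fintype I] [DecidableEq I]
    (f : (I → Bool) → Bool) (x : I → Bool) : ℕ :=
  (Finset.univ.filter fun i => f (Function.update x i (!x i)) ≠ f x).card

/-- Sensitivity of `f`: maximum of `localSens f x` over all inputs `x`. -/
def sens {I : Type} [Fintype I] [DecidableEq I] (f : (I → Bool) → Bool) : ℕ :=
  Finset.univ.sup (localSens f)

/-- `sensOn b f` is `s^b(f)`: max sensitivity over inputs with `f x = b`. -/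
def sensOn {I : Type} [Fintype I] [DecidableEq I] (b : Bool) (f : (I → Bool) → Bool) : ℕ :=
  (Finset.univ.filter fun x => f x = b).sup (localSens f)

/-- Flip all the coordinates of `x` in the block `B`. -/
def flipBlock {I : Type} [DecidableEq I] (x : I → Bool) (B : Finset I) : I → Bool :=
  fun i => if i ∈ B then !x i else x i

/-- Block sensitivity of `f` at `x`: maximum number of pairwise disjoint sensitive blocks. -/
noncomputable def localBlockSens {I : Type} [Fintype I] [DecidableEq I]
    (f : (I → Bool) → Bool) (x : I → Bool) : ℕ :=
  sSup {n : ℕ | ∃ B : Fin n → Finset I,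
    (∀ j, f (flipBlock x (B j)) ≠ f x) ∧
    ∀ j j', j ≠ j' → Disjoint (B j) (B j')}

/-- Block sensitivity of `f`. -/
noncomputable def blockSens {I : Type} [Fintype I] [DecidableEq I]
    (f : (I → Bool) → Bool) : ℕ :=
  Finset.univ.sup (localBlockSens f)

/-- Image of a `k`-set under a permutation of the vertices. -/
def permKSet {v k : ℕ} (σ : Equiv.Perm (Fin v)) (S : KSet v k) : KSet v k :=
  ⟨S.1.map σ.toEmbedding, by rw [Finset.card_map]; exact S.2⟩

/-- A `k`-uniform hypergraph property: invariance under all vertex permutations,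
where `(σ • G) S = G (σ⁻¹ S)`. -/
def IsHypergraphProperty {v k : ℕ} (f : HGraph v k → Bool) : Prop :=
  ∀ (σ : Equiv.Perm (Fin v)) (G : HGraph v k),
    f (fun S => G (permKSet σ⁻¹ S)) = f G

variable {v k : ℕ}

/-- `A` spans a complete `k`-uniform hypergraph on `k + 1` vertices, and no edge of `G` outside of
`A` meets `A` in `t` or more vertices. -/
def IsIsolatedClique (t : ℕ) (G : HGraph v k) (A : Finset (Fin v)) : Prop :=
  A.card = k + 1 ∧ ∀ S : KSet v k, t ≤ (S.1 ∩ A).card → (G S = true ↔ S.1 ⊆ A)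

open Classical in
/-- The property of containing an isolated clique. -/
noncomputable def hasIsolatedClique (t : ℕ) (G : HGraph v k) : Bool :=
  decide (∃ A, IsIsolatedClique t G A)

theorem hasIsolatedClique_eq_true {t : ℕ} {G : HGraph v k} :
    hasIsolatedClique t G = true ↔ ∃ A, IsIsolatedClique t G A := by
  simp [hasIsolatedClique]

theorem hasIsolatedClique_eq_false {t : ℕ} {G : HGraph v k} :
    hasIsolatedClique t G = false ↔ ∀ A, ¬ IsIsolatedClique t G A := by
  simp [hasIsolatedClique]

theorem permKSet_inv_permKSet (σ : Equiv.Perm (Fin v)) (S : KSet v k) :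
    permKSet σ⁻¹ (permKSet σ S) = S := by
  apply Subtype.ext
  ext x
  simp [permKSet, Equiv.Perm.inv_def]

theorem IsIsolatedClique.perm {t : ℕ} {G : HGraph v k} {A : Finset (Fin v)}
    (h : IsIsolatedClique t G A) (σ : Equiv.Perm (Fin v)) :
    IsIsolatedClique t (fun S => G (permKSet σ⁻¹ S)) (A.map σ.toEmbedding) := by
  refine ⟨by simpa using h.1, fun S hS => ?_⟩
  have hmap : S.1 = (permKSet σ⁻¹ S).1.map σ.toEmbedding := by
    have := permKSet_inv_permKSet σ⁻¹ S
    rw [inv_inv] at this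
    exact (congrArg Subtype.val this).symm
  rw [hmap, ← Finset.map_inter, Finset.card_map] at hS
  rw [h.2 _ hS, ← Finset.map_subset_map (f := σ.toEmbedding), ← hmap]

theorem isHypergraphProperty_hasIsolatedClique (t : ℕ) :
    IsHypergraphProperty (hasIsolatedClique t : HGraph v k → Bool) := by
  intro σ G
  rw [Bool.eq_iff_iff, hasIsolatedClique_eq_true, hasIsolatedClique_eq_true]
  constructor
  · rintro ⟨A, hA⟩
    have := hA.perm σ⁻¹
    simp only [inv_inv, permKSet_inv_permKSet] at this
    exact ⟨_, this⟩
  · rintro ⟨A, hA⟩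
    exact ⟨_, hA.perm σ⟩

/-- Two isolated cliques in hypergraphs that differ in at most two `k`-sets are almost disjoint. -/
theorem IsIsolatedClique.card_inter_lt {t : ℕ} (ht : 1 ≤ t) (htk : t < k) {G G' : HGraph v k}
    {A A' : Finset (Fin v)} (h : IsIsolatedClique t G A) (h' : IsIsolatedClique t G' A')
    (e e' : KSet v k) (heq : ∀ S, S ≠ e → S ≠ e' → G S = G' S) (hne : A ≠ A') :
    (A ∩ A').card < t := by
  have key : ∀ S : KSet v k, t ≤ (S.1 ∩ A).card → t ≤ (S.1 ∩ A').card →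
      ¬ (S.1 ⊆ A ↔ S.1 ⊆ A') → S = e ∨ S = e' := by
    intro S h1 h2 h3
    by_contra! hc
    exact h3 (by rw [← h.2 S h1, ← h'.2 S h2, heq S hc.1 hc.2])
  have pair : ∀ A A' : Finset (Fin v), A.card = k + 1 → A'.card = k + 1 → A ≠ A' →
      t ≤ (A ∩ A').card → ∃ S T : KSet v k, S ≠ T ∧ (S.1 ⊆ A ∧ T.1 ⊆ A) ∧
        (t ≤ (S.1 ∩ A').card ∧ t ≤ (T.1 ∩ A').card) ∧ (¬ S.1 ⊆ A' ∧ ¬ T.1 ⊆ A') := by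
    intro A A' hA hA' hne hle
    have hsub : ∃ x ∈ A, x ∉ A' := by
      by_contra! hc
      exact hne (Finset.eq_of_subset_of_card_le hc (by omega))
    have hadd := Finset.card_sdiff_add_card_inter A A'
    obtain ⟨x, hx, y, hy, hxy, hgood⟩ : ∃ x ∈ A, ∃ y ∈ A, x ≠ y ∧ ∀ z, z = x ∨ z = y →
        t ≤ ((A.erase z) ∩ A').card ∧ ¬ A.erase z ⊆ A' := by
      rcases hle.eq_or_lt with heq | hlt
      · obtain ⟨x, hx, y, hy, hxy⟩ := Finset.one_lt_card.1 (show 1 < (A \ A').card by omega)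
        rw [Finset.mem_sdiff] at hx hy
        refine ⟨x, hx.1, y, hy.1, hxy, ?_⟩
        rintro z (rfl | rfl)
        · refine ⟨?_, fun hs => hy.2 (hs (Finset.mem_erase.2 ⟨hxy.symm, hy.1⟩))⟩
          rw [Finset.erase_inter, Finset.erase_eq_of_notMem (by simp [hx.2])]
          exact hle
        · refine ⟨?_, fun hs => hx.2 (hs (Finset.mem_erase.2 ⟨hxy, hx.1⟩))⟩
          rw [Finset.erase_inter, Finset.erase_eq_of_notMem (by simp [hy.2])]
          exact hle
      · obtain ⟨x, hx, y, hy, hxy⟩ := Finset.one_lt_card.1 (show 1 < (A ∩ A').card by omega)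
        have hgood : ∀ z ∈ A ∩ A', t ≤ ((A.erase z) ∩ A').card ∧ ¬ A.erase z ⊆ A' := by
          intro z hz
          obtain ⟨w, hw, hw'⟩ := hsub
          refine ⟨?_, fun hs => hw' (hs (Finset.mem_erase.2 ⟨?_, hw⟩))⟩
          · rw [Finset.erase_inter, Finset.card_erase_of_mem hz]
            omega
          · rintro rfl
            exact hw' (Finset.mem_inter.1 hz).2
        refine ⟨x, (Finset.mem_inter.1 hx).1, y, (Finset.mem_inter.1 hy).1, hxy, ?_⟩
        rintro z (rfl | rfl)
        exacts [hgood _ hx, hgood _ hy]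
    refine ⟨⟨A.erase x, by rw [Finset.card_erase_of_mem hx, hA]; rfl⟩,
      ⟨A.erase y, by rw [Finset.card_erase_of_mem hy, hA]; rfl⟩, ?_,
      ⟨Finset.erase_subset _ _, Finset.erase_subset _ _⟩,
      ⟨(hgood x (.inl rfl)).1, (hgood y (.inr rfl)).1⟩,
      ⟨(hgood x (.inl rfl)).2, (hgood y (.inr rfl)).2⟩⟩
    intro heq
    have := congrArg Subtype.val heq
    exact hxy ((Finset.erase_inj A hx).1 this)
  by_contra! hle
  have hself : ∀ (S : KSet v k) (A : Finset (Fin v)), S.1 ⊆ A → t ≤ (S.1 ∩ A).card := by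
    intro S A hS
    rw [Finset.inter_eq_left.2 hS, S.2]
    exact htk.le
  obtain ⟨S, T, hST, ⟨hS, hT⟩, ⟨hS', hT'⟩, hSn, hTn⟩ := pair A A' h.1 h'.1 hne hle
  obtain ⟨U, _, _, ⟨hU, _⟩, ⟨hU', _⟩, hUn, _⟩ :=
    pair A' A h'.1 h.1 hne.symm (by rwa [Finset.inter_comm])
  have hSU : S ≠ U := fun hh => hUn (hh ▸ hS)
  have hTU : T ≠ U := fun hh => hUn (hh ▸ hT)
  have h1 := key S (hself S A hS) hS' (by tauto)
  have h2 := key T (hself T A hT) hT' (by tauto)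
  have h3 := key U hU' (hself U A' hU) (by tauto)
  grind

theorem IsIsolatedClique.of_update {t : ℕ} {G : HGraph v k} {A : Finset (Fin v)} {e : KSet v k}
    {b : Bool} (h : IsIsolatedClique t G A) (he : (e.1 ∩ A).card < t) :
    IsIsolatedClique t (Function.update G e b) A := by
  refine ⟨h.1, fun S hS => ?_⟩
  rw [Function.update_of_ne, h.2 S hS]
  rintro rfl
  omega

theorem localSens_le_of_false {t : ℕ} (ht : 1 ≤ t) (htk : t < k) {G : HGraph v k}
    (hG : hasIsolatedClique t G = false) : localSens (hasIsolatedClique t) G ≤ v ^ t := by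
  rw [localSens, hG]
  set F := Finset.univ.filter fun e => hasIsolatedClique t (Function.update G e (!G e)) ≠ false
  have hF : ∀ e ∈ F, ∃ A, IsIsolatedClique t (Function.update G e (!G e)) A := by
    intro e he
    simpa [F, hasIsolatedClique_eq_true] using he
  rw [hasIsolatedClique_eq_false] at hG
  have hmeet : ∀ e A, IsIsolatedClique t (Function.update G e (!G e)) A → t ≤ (e.1 ∩ A).card := by
    intro e A hA
    by_contra! hlt
    have := hA.of_update (b := G e) hlt
    rw [Function.update_idem, Function.update_eq_self] at this
    exact hG A this
  choose! A hA using hF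
  have hT : ∀ e ∈ F, ∃ T ⊆ A e, T.card = t := fun e he =>
    Finset.exists_subset_card_eq (by have := (hA e he).1; omega)
  choose! T hTA hTc using hT
  calc F.card ≤ (Finset.powersetCard t (Finset.univ : Finset (Fin v))).card := by
        refine Finset.card_le_card_of_injOn T
          (fun e he => by simpa [Finset.mem_powersetCard] using hTc e he) ?_
        intro e he e' he' hee
        by_contra hne
        have hAA : A e = A e' := by
          by_contra hAne
          have hlt := (hA e he).card_inter_lt ht htk (hA e' he') e e'
            (fun S h1 h2 => by rw [Function.update_of_ne h1, Function.update_of_ne h2]) hAne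
          have hsub : T e ⊆ A e ∩ A e' :=
            Finset.subset_inter (hTA e he) (hee ▸ hTA e' he')
          have := Finset.card_le_card hsub
          have := hTc e he
          omega
        have hm := hmeet e _ (hA e he)
        have h1 := (hA e he).2 e hm
        have h2 := (hA e' he').2 e (hAA ▸ hm)
        rw [Function.update_self] at h1
        rw [Function.update_of_ne hne, ← hAA, ← h1] at h2
        revert h2
        cases G e <;> simp
    _ ≤ v ^ t := by
        rw [Finset.card_powersetCard, Finset.card_univ, Fintype.card_fin]
        exact Nat.choose_le_pow v t

theorem localSens_le_of_true {t : ℕ} {G : HGraph v k}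
    (hG : hasIsolatedClique t G = true) :
    localSens (hasIsolatedClique t) G ≤ 2 ^ (k + 1) * v ^ (k - t) := by
  rw [localSens, hG]
  rw [hasIsolatedClique_eq_true] at hG
  obtain ⟨A, hA⟩ := hG
  set F := Finset.univ.filter fun e => hasIsolatedClique t (Function.update G e (!G e)) ≠ true
  have hF : ∀ e ∈ F, ∃ T ⊆ e.1 ∩ A, T.card = t := by
    intro e he
    apply Finset.exists_subset_card_eq
    by_contra! hlt
    simp only [F, Finset.mem_filter, ne_eq, hasIsolatedClique_eq_true] at he
    exact he.2 ⟨A, hA.of_update hlt⟩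
  choose! T hTA hTc using hF
  calc F.card ≤ (A.powerset ×ˢ
          Finset.powersetCard (k - t) (Finset.univ : Finset (Fin v))).card := by
        refine Finset.card_le_card_of_injOn (fun e => (T e, e.1 \ T e)) ?_ ?_
        · intro e he
          have hs := hTA e he
          simp only [Finset.coe_product, Set.mem_prod, Finset.mem_coe, Finset.mem_powerset,
            Finset.mem_powersetCard, Finset.subset_univ, true_and]
          refine ⟨hs.trans Finset.inter_subset_right, ?_⟩
          rw [Finset.card_sdiff_of_subset (hs.trans Finset.inter_subset_left), e.2, hTc e he]
        · intro e he e' he' hee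
          simp only [Prod.mk.injEq] at hee
          apply Subtype.ext
          rw [← Finset.union_sdiff_of_subset ((hTA e he).trans Finset.inter_subset_left),
            ← Finset.union_sdiff_of_subset ((hTA e' he').trans Finset.inter_subset_left),
            hee.2, hee.1]
    _ ≤ 2 ^ (k + 1) * v ^ (k - t) := by
        rw [Finset.card_product, Finset.card_powerset, hA.1, Finset.card_powersetCard,
          Finset.card_univ, Fintype.card_fin]
        exact Nat.mul_le_mul_left _ (Nat.choose_le_pow v _)

/-- The complete `k`-uniform hypergraph on the vertex set `A`. -/
def cliqueOn (k : ℕ) (A : Finset (Fin v)) : HGraph v k := fun S => decide (S.1 ⊆ A)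

theorem isIsolatedClique_cliqueOn (t : ℕ) {A : Finset (Fin v)} (hA : A.card = k + 1) :
    IsIsolatedClique t (cliqueOn k A) A :=
  ⟨hA, fun S _ => by simp [cliqueOn]⟩

theorem hasIsolatedClique_update_cliqueOn {t : ℕ} (ht : 1 ≤ t) (htk : t < k)
    {A : Finset (Fin v)} (hA : A.card = k + 1) {e : KSet v k} (he : t ≤ (e.1 ∩ A).card) :
    hasIsolatedClique t (Function.update (cliqueOn k A) e (!cliqueOn k A e)) = false := by
  rw [hasIsolatedClique_eq_false]
  intro A' hA'
  have hA0 := isIsolatedClique_cliqueOn t hA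
  by_cases hAA : A = A'
  · subst hAA
    have h1 := hA'.2 e he
    rw [← hA0.2 e he, Function.update_self] at h1
    revert h1
    cases cliqueOn k A e <;> simp
  · have hlt := hA0.card_inter_lt ht htk hA' e e
      (fun S h1 _ => by rw [Function.update_of_ne h1]) hAA
    obtain ⟨x, hx, y, hy, hxy⟩ := Finset.one_lt_card.1 (show 1 < A'.card by have := hA'.1; omega)
    have hne : ∃ z ∈ A', A'.erase z ≠ e.1 := by
      by_contra! hc
      exact hxy ((Finset.erase_inj A' hx).1 ((hc x hx).trans (hc y hy).symm))
    obtain ⟨z, hz, hze⟩ := hne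
    let S : KSet v k := ⟨A'.erase z, by rw [Finset.card_erase_of_mem hz, hA'.1]; rfl⟩
    have hSA' : S.1 ⊆ A' := Finset.erase_subset _ _
    have hS := (hA'.2 S (by rw [Finset.inter_eq_left.2 hSA', S.2]; exact htk.le)).2 hSA'
    rw [Function.update_of_ne (fun hh => hze (congrArg Subtype.val hh))] at hS
    have hSA : S.1 ⊆ A := by simpa [cliqueOn] using hS
    have := Finset.card_le_card (Finset.subset_inter hSA hSA')
    rw [S.2] at this
    omega

theorem choose_le_sens {t : ℕ} (ht : 1 ≤ t) (htk : t < k) (hv : k + 1 ≤ v) :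
    (v - (k + 1)).choose (k - t) ≤ sens (hasIsolatedClique t : HGraph v k → Bool) := by
  obtain ⟨A, -, hA⟩ := Finset.exists_subset_card_eq
    (show k + 1 ≤ (Finset.univ : Finset (Fin v)).card by simpa using hv)
  obtain ⟨T, hTA, hT⟩ := Finset.exists_subset_card_eq (show t ≤ A.card by omega)
  have hG : hasIsolatedClique t (cliqueOn k A) = true :=
    hasIsolatedClique_eq_true.2 ⟨A, isIsolatedClique_cliqueOn t hA⟩
  refine le_trans ?_ (Finset.le_sup (Finset.mem_univ (cliqueOn k A)))
  rw [localSens, hG]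
  have hc : (v - (k + 1)).choose (k - t) = (Finset.powersetCard (k - t) Aᶜ).card := by
    rw [Finset.card_powersetCard, Finset.card_compl, Fintype.card_fin, hA]
  have hdisj : ∀ U ∈ Finset.powersetCard (k - t) Aᶜ, Disjoint T U := by
    intro U hU
    rw [Finset.mem_powersetCard] at hU
    exact Finset.disjoint_of_subset_left hTA
      (Finset.disjoint_of_subset_right hU.1 disjoint_compl_right)
  rw [hc]
  refine Finset.card_le_card_of_surjOn (fun S : KSet v k => S.1 \ T) ?_
  intro U hU
  have hd := hdisj U hU
  refine ⟨⟨T ∪ U, ?_⟩, ?_, ?_⟩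
  · rw [Finset.card_union_of_disjoint hd, hT, (Finset.mem_powersetCard.1 hU).2]
    omega
  · simp only [Finset.coe_filter, Finset.mem_univ, true_and, Set.mem_ofPred_eq]
    rw [hasIsolatedClique_update_cliqueOn ht htk hA]
    · simp
    · refine hT.ge.trans (Finset.card_le_card ?_)
      exact Finset.subset_inter Finset.subset_union_left hTA
  · simp only
    rw [Finset.union_sdiff_left, Finset.sdiff_eq_self_of_disjoint hd.symm]

theorem le_card_of_sensitive_blocks {I : Type} [Fintype I] [DecidableEq I]
    {f : (I → Bool) → Bool} {x : I → Bool} {n : ℕ} {B : Fin n → Finset I}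
    (hB : ∀ j, f (flipBlock x (B j)) ≠ f x) (hd : ∀ j j', j ≠ j' → Disjoint (B j) (B j')) :
    n ≤ Fintype.card I := by
  have hne : ∀ j, ∃ i, i ∈ B j := by
    intro j
    by_contra! hc
    exact hB j (by congr 1; ext i; simp [flipBlock, hc])
  choose g hg using hne
  have hinj : Function.Injective g := by
    intro j j' h
    by_contra hjj
    exact Finset.disjoint_left.1 (hd j j' hjj) (hg j) (h ▸ hg j')
  simpa using Fintype.card_le_of_injective g hinj

theorem blockSens_le_card {I : Type} [Fintype I] [DecidableEq I] (f : (I → Bool) → Bool) :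
    blockSens f ≤ Fintype.card I := by
  refine Finset.sup_le fun x _ => csSup_le' ?_
  rintro n ⟨B, hB, hd⟩
  exact le_card_of_sensitive_blocks hB hd

theorem le_blockSens {I : Type} [Fintype I] [DecidableEq I] {f : (I → Bool) → Bool}
    (x : I → Bool) {n : ℕ} (B : Fin n → Finset I)
    (hB : ∀ j, f (flipBlock x (B j)) ≠ f x) (hd : ∀ j j', j ≠ j' → Disjoint (B j) (B j')) :
    n ≤ blockSens f := by
  refine le_trans ?_ (Finset.le_sup (Finset.mem_univ x))
  refine le_csSup ⟨Fintype.card I, ?_⟩ ⟨B, hB, hd⟩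
  rintro m ⟨B', hB', hd'⟩
  exact le_card_of_sensitive_blocks hB' hd'

/-- Two `(k + 1)`-sets with the same sum modulo `v` that share `k` elements are equal. -/
theorem eq_of_sum_modEq {A A' S : Finset (Fin v)} (hA : A.card = S.card + 1)
    (hA' : A'.card = S.card + 1) (hS : S ⊆ A) (hS' : S ⊆ A')
    (h : (∑ i ∈ A, (i : ℕ)) ≡ (∑ i ∈ A', (i : ℕ)) [MOD v]) : A = A' := by
  obtain ⟨a, ha⟩ := Finset.card_eq_one.1
    (show (A \ S).card = 1 by rw [Finset.card_sdiff_of_subset hS]; omega)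
  obtain ⟨a', ha'⟩ := Finset.card_eq_one.1
    (show (A' \ S).card = 1 by rw [Finset.card_sdiff_of_subset hS']; omega)
  rw [← Finset.sum_sdiff hS, ← Finset.sum_sdiff hS', ha, ha', Finset.sum_singleton,
    Finset.sum_singleton] at h
  have haa : a = a' :=
    Fin.ext ((Nat.ModEq.add_right_cancel' _ h).eq_of_lt_of_lt a.2 a'.2)
  rw [← Finset.sdiff_union_of_subset hS, ← Finset.sdiff_union_of_subset hS', ha, ha', haa]

theorem choose_le_mul_blockSens {t : ℕ} (htk : t < k) :
    v.choose (k + 1) ≤ v * blockSens (hasIsolatedClique t : HGraph v k → Bool) := by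
  have hfib := Finset.card_le_mul_card_image_of_maps_to
    (s := Finset.powersetCard (k + 1) (Finset.univ : Finset (Fin v)))
    (t := Finset.range v) (f := fun A : Finset (Fin v) => (∑ i ∈ A, (i : ℕ)) % v) ?_
    (blockSens (hasIsolatedClique t : HGraph v k → Bool)) ?_
  · rw [mul_comm]
    simpa using hfib
  · intro A hA
    rw [Finset.mem_powersetCard] at hA
    obtain ⟨x, -⟩ := Finset.card_pos.1 (show 0 < A.card by omega)
    exact Finset.mem_range.2 (Nat.mod_lt _ x.pos)
  · intro r _
    set F := (Finset.powersetCard (k + 1) (Finset.univ : Finset (Fin v))).filter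
      fun A : Finset (Fin v) => (∑ i ∈ A, (i : ℕ)) % v = r with hFdef
    have hF : ∀ A ∈ F, A.card = k + 1 ∧ (∑ i ∈ A, (i : ℕ)) % v = r := by
      intro A hA
      simpa [hFdef, Finset.mem_powersetCard] using hA
    have hempty : hasIsolatedClique t (fun _ : KSet v k => false) = false := by
      rw [hasIsolatedClique_eq_false]
      intro A hA
      obtain ⟨S, hSA, hS⟩ := Finset.exists_subset_card_eq (show k ≤ A.card by have := hA.1; omega)
      have := hA.2 ⟨S, hS⟩ (by simp only [Finset.inter_eq_left.2 hSA, hS]; exact htk.le)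
      simp [hSA] at this
    refine le_blockSens (fun _ => false)
      (fun j => Finset.univ.filter fun S : KSet v k => S.1 ⊆ (F.equivFin.symm j).1) ?_ ?_
    · intro j
      rw [hempty]
      have hj := hF _ (F.equivFin.symm j).2
      have heq : flipBlock (fun _ => false) (Finset.univ.filter
          fun S : KSet v k => S.1 ⊆ (F.equivFin.symm j).1) =
          cliqueOn k (F.equivFin.symm j).1 := by
        ext S
        by_cases hS : S.1 ⊆ (F.equivFin.symm j).1 <;> simp [flipBlock, cliqueOn, hS]
      rw [heq, hasIsolatedClique_eq_true.2 ⟨_, isIsolatedClique_cliqueOn t hj.1⟩]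
      simp
    · intro j j' hjj
      rw [Finset.disjoint_left]
      intro S hS hS'
      simp only [Finset.mem_filter, Finset.mem_univ, true_and] at hS hS'
      have hj := hF _ (F.equivFin.symm j).2
      have hj' := hF _ (F.equivFin.symm j').2
      have := eq_of_sum_modEq (by rw [hj.1, S.2]) (by rw [hj'.1, S.2]) hS hS'
        (hj.2.trans hj'.2.symm)
      exact hjj (F.equivFin.symm.injective (Subtype.ext this))

theorem pow_le_two_pow_mul_factorial_mul_choose {m n r : ℕ} (h : m ≤ 2 * (n + 1 - r)) :
    m ^ r ≤ 2 ^ r * r.factorial * n.choose r := by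
  calc m ^ r ≤ (2 * (n + 1 - r)) ^ r := Nat.pow_le_pow_left h r
    _ = 2 ^ r * (n + 1 - r) ^ r := mul_pow _ _ _
    _ ≤ 2 ^ r * n.descFactorial r := Nat.mul_le_mul_left _ (Nat.pow_sub_le_descFactorial n r)
    _ = 2 ^ r * r.factorial * n.choose r := by
      rw [Nat.descFactorial_eq_factorial_mul_choose, mul_assoc]

theorem stmt12 (k : ℕ) (hk : 2 ≤ k) :
    ∃ f : (v : ℕ) → (HGraph v k → Bool),
      (∀ v, IsHypergraphProperty (f v)) ∧
      ∃ c C : ℝ, 0 < c ∧ 0 < C ∧ ∃ v₀ : ℕ, ∀ v : ℕ, v₀ ≤ v →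
        c * (v : ℝ) ^ ((k + 1) / 2 : ℕ) ≤ (sens (f v) : ℝ) ∧
        (sens (f v) : ℝ) ≤ C * (v : ℝ) ^ ((k + 1) / 2 : ℕ) ∧
        c * (v : ℝ) ^ k ≤ (blockSens (f v) : ℝ) ∧
        (blockSens (f v) : ℝ) ≤ C * (v : ℝ) ^ k := by
  have ht : 1 ≤ k / 2 := by omega
  have htk : k / 2 < k := by omega
  have hkt : k - k / 2 = (k + 1) / 2 := by omega
  set M : ℕ := 2 ^ (k + 1) * (k + 1).factorial
  have hMpos : 0 < M := by positivity
  refine ⟨fun v => hasIsolatedClique (k / 2), fun v => isHypergraphProperty_hasIsolatedClique _,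
    (M : ℝ)⁻¹, 2 ^ (k + 1), by positivity, by positivity, 4 * k + 4, fun v hv => ?_⟩
  have lower : ∀ {a b : ℕ}, a ≤ M * b → (M : ℝ)⁻¹ * a ≤ b := by
    intro a b hab
    rw [inv_mul_le_iff₀ (by exact_mod_cast hMpos)]
    exact_mod_cast hab
  refine ⟨?_, ?_, ?_, ?_⟩
  · rw [← Nat.cast_pow]
    apply lower
    rw [← hkt]
    calc v ^ (k - k / 2)
        ≤ 2 ^ (k - k / 2) * (k - k / 2).factorial * (v - (k + 1)).choose (k - k / 2) :=
          pow_le_two_pow_mul_factorial_mul_choose (by omega)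
      _ ≤ M * sens (hasIsolatedClique (k / 2) : HGraph v k → Bool) := by
          refine Nat.mul_le_mul (Nat.mul_le_mul (Nat.pow_le_pow_right two_pos (by omega))
            (Nat.factorial_le (by omega))) (choose_le_sens ht htk (by omega))
  · have : sens (hasIsolatedClique (k / 2) : HGraph v k → Bool) ≤
        2 ^ (k + 1) * v ^ ((k + 1) / 2) := by
      refine Finset.sup_le fun G _ => ?_
      cases hG : hasIsolatedClique (k / 2) G
      · calc localSens (hasIsolatedClique (k / 2)) G ≤ v ^ (k / 2) :=
              localSens_le_of_false ht htk hG
          _ ≤ v ^ ((k + 1) / 2) := Nat.pow_le_pow_right (by omega) (by omega)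
          _ ≤ 2 ^ (k + 1) * v ^ ((k + 1) / 2) := Nat.le_mul_of_pos_left _ (by positivity)
      · rw [← hkt]
        exact localSens_le_of_true hG
    exact_mod_cast this
  · rw [← Nat.cast_pow]
    apply lower
    refine Nat.le_of_mul_le_mul_left ?_ (show 0 < v by omega)
    calc v * v ^ k = v ^ (k + 1) := (pow_succ' v k).symm
      _ ≤ M * v.choose (k + 1) := pow_le_two_pow_mul_factorial_mul_choose (by omega)
      _ ≤ M * (v * blockSens (hasIsolatedClique (k / 2) : HGraph v k → Bool)) :=
          Nat.mul_le_mul_left _ (choose_le_mul_blockSens htk)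
      _ = v * (M * blockSens (hasIsolatedClique (k / 2) : HGraph v k → Bool)) := by ring
  · have hb : blockSens (hasIsolatedClique (k / 2) : HGraph v k → Bool) ≤ v ^ k := by
      refine (blockSens_le_card _).trans ?_
      rw [Fintype.card_finset_len, Fintype.card_fin]
      exact Nat.choose_le_pow v k
    have hle : blockSens (hasIsolatedClique (k / 2) : HGraph v k → Bool) ≤
        2 ^ (k + 1) * v ^ k := hb.trans (Nat.le_mul_of_pos_left _ (by positivity))
    exact_mod_cast hle
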